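/- arXiv:1307.1456 — 3 statements merged into one kernel-verified Lean document; each statement's English description precedes it below -/
import Mathlib

section
/- Let Ω ⊂ ℝ^N be a nonempty bounded open set, q > 0, and let a, b: Ω → ℝ be continuous with 0 ≤ b(x) ≤ B and a(x) ≥ m > 0 for all x ∈ Ω, where B = sup_Ω b and m = inf_Ω a. Let f: (0,∞) → (0,∞) be strictly increasing. Suppose u, w ∈ C²(Ω) are positive, u satisfies Δu(x) + b(x)|∇u(x)|^q ≥ a(x) f(u(x)) in Ω, w satisfies Δw(x) + B|∇w(x)|^q ≤ m f(w(x)) in Ω, and (u − w)(x) → −∞ as dist(x, ∂Ω) → 0. Then u(x) ≤ w(x) for all x ∈ Ω. -/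
/-!
The proof is the classical maximum principle. If `u > w` somewhere, then, since `u - w` is negative
near `∂Ω`, the supremum of `u - w` over `Ω` is positive and attained at some point `x₁` of the
compact set of points of `Ω` at distance at least `δ` from `∂Ω`. At this interior maximum
`∇u = ∇w`, and `Δu ≤ Δw` by the second-derivative test along each coordinate line
(`lap_le_lap_of_isLocalMax`). Chaining the two differential inequalities gives
`m f(u(x₁)) ≤ m f(w(x₁))`, which contradicts the strict monotonicity of `f`, as `u(x₁) > w(x₁)`.
-/

open MeasureTheory Metric Set Filter Bornology
open scoped Topology

noncomputable section

/-- The Laplacian of a real-valued function on Euclidean space. -/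
def lap {N : ℕ} (u : EuclideanSpace ℝ (Fin N) → ℝ) (x : EuclideanSpace ℝ (Fin N)) : ℝ :=
  ∑ i : Fin N,
    fderiv ℝ (fun y => fderiv ℝ u y (EuclideanSpace.single i 1)) x (EuclideanSpace.single i 1)

/-- The necessary second-order condition at a local maximum, in one variable. -/
lemma deriv_deriv_nonpos_of_isLocalMax {g : ℝ → ℝ} {t : ℝ} (h : IsLocalMax g t)
    (hc : ContinuousAt g t) : deriv (deriv g) t ≤ 0 := by
  by_contra! hpos
  -- A positive second derivative makes `t` a local minimum too, so `g` is locally constant.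
  have hmin := isLocalMin_of_deriv_deriv_pos hpos h.deriv_eq_zero hc
  have hconst : g =ᶠ[𝓝 t] fun _ => g t := by
    filter_upwards [h, hmin] with s h₁ h₂ using le_antisymm h₁ h₂
  have h0 : deriv (deriv g) t = 0 := by
    rw [hconst.deriv.deriv_eq]
    simp
  linarith

/-- At a local maximum, the second derivative in any direction `e` is nonpositive. -/
lemma fderiv_fderiv_nonpos_of_isLocalMax {E : Type*} [NormedAddCommGroup E] [NormedSpace ℝ E]
    {v : E → ℝ} {x : E} (hv : ContDiffAt ℝ 2 v x) (h : IsLocalMax v x) (e : E) :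
    fderiv ℝ (fun y => fderiv ℝ v y e) x e ≤ 0 := by
  have hline : ∀ t : ℝ, HasDerivAt (fun t : ℝ => x + t • e) e t := fun t => by
    simpa using ((hasDerivAt_id t).smul_const e).const_add x
  have htend : Tendsto (fun t : ℝ => x + t • e) (𝓝 0) (𝓝 x) := by
    simpa using (hline 0).continuousAt.tendsto
  have hdiff : ∀ᶠ y in 𝓝 x, DifferentiableAt ℝ v y :=
    (hv.eventually (by simp)).mono fun y hy => hy.differentiableAt (by simp)
  have hd1 : deriv (fun t : ℝ => v (x + t • e)) =ᶠ[𝓝 0] fun t => fderiv ℝ v (x + t • e) e := by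
    filter_upwards [htend.eventually hdiff] with t ht
    exact (ht.hasFDerivAt.comp_hasDerivAt t (hline t)).deriv
  have hF : DifferentiableAt ℝ (fun y => fderiv ℝ v y e) x :=
    ((hv.fderiv_right (m := 1) (by norm_num)).differentiableAt (by simp)).clm_apply
      (differentiableAt_const e)
  have hd2 : deriv (fun t : ℝ => fderiv ℝ v (x + t • e) e) 0
      = fderiv ℝ (fun y => fderiv ℝ v y e) x e := by
    have hF' : HasFDerivAt (fun y => fderiv ℝ v y e) (fderiv ℝ (fun y => fderiv ℝ v y e) x)
        (x + (0 : ℝ) • e) := by simpa using hF.hasFDerivAt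
    exact (hF'.comp_hasDerivAt (0 : ℝ) (hline 0)).deriv
  have hmax : IsLocalMax (fun t : ℝ => v (x + t • e)) 0 := by
    have := htend.eventually h
    simpa [IsLocalMax, IsMaxFilter] using this
  have hc : ContinuousAt (fun t : ℝ => v (x + t • e)) 0 := by
    refine ContinuousAt.comp (g := v) ?_ (hline 0).continuousAt
    simpa using hv.continuousAt
  have := deriv_deriv_nonpos_of_isLocalMax hmax hc
  rwa [hd1.deriv_eq, hd2] at this

lemma lap_le_lap_of_isLocalMax {N : ℕ} {u w : EuclideanSpace ℝ (Fin N) → ℝ}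
    {x : EuclideanSpace ℝ (Fin N)} (hu : ContDiffAt ℝ 2 u x) (hw : ContDiffAt ℝ 2 w x)
    (h : IsLocalMax (fun y => u y - w y) x) : lap u x ≤ lap w x := by
  have diff : ∀ {v : EuclideanSpace ℝ (Fin N) → ℝ}, ContDiffAt ℝ 2 v x →
      ∀ e, DifferentiableAt ℝ (fun y => fderiv ℝ v y e) x := fun hv e =>
    ((hv.fderiv_right (m := 1) (by norm_num)).differentiableAt (by simp)).clm_apply
      (differentiableAt_const e)
  refine Finset.sum_le_sum fun i _ => ?_
  have key := fderiv_fderiv_nonpos_of_isLocalMax (hu.sub hw) h (EuclideanSpace.single i 1)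
  have heq : (fun y => fderiv ℝ (fun z => u z - w z) y (EuclideanSpace.single i 1)) =ᶠ[𝓝 x]
      fun y => fderiv ℝ u y (EuclideanSpace.single i 1)
        - fderiv ℝ w y (EuclideanSpace.single i 1) := by
    filter_upwards [hu.eventually (by simp), hw.eventually (by simp)] with y h₁ h₂
    rw [fderiv_fun_sub (h₁.differentiableAt (by simp)) (h₂.differentiableAt (by simp))]
    rfl
  rw [heq.fderiv_eq, fderiv_fun_sub (diff hu _) (diff hw _)] at key
  exact sub_nonpos.mp key

/-- Comparison principle: if `Δu + b(x)|∇u|^q ≥ a(x) f(u)`, `Δw + B|∇w|^q ≤ m f(w)` in `Ω`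
with `B = sup_Ω b`, `m = inf_Ω a > 0`, `f` strictly increasing, and `u − w → −∞` at `∂Ω`,
then `u ≤ w` in `Ω`. -/
theorem comparison_principle
    {N : ℕ} (Ω : Set (EuclideanSpace ℝ (Fin N)))
    (hne : Ω.Nonempty) (ho : IsOpen Ω) (hbdd : IsBounded Ω)
    (q : ℝ) (hq : 0 < q)
    (a b : EuclideanSpace ℝ (Fin N) → ℝ)
    (hac : ContinuousOn a Ω) (hbc : ContinuousOn b Ω)
    (B m : ℝ) (hBdef : B = sSup (b '' Ω)) (hmdef : m = sInf (a '' Ω)) (hm : 0 < m)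
    (hb : ∀ x ∈ Ω, 0 ≤ b x ∧ b x ≤ B) (ha : ∀ x ∈ Ω, m ≤ a x)
    (f : ℝ → ℝ) (hf : StrictMonoOn f (Ioi 0)) (hfpos : ∀ t > (0:ℝ), 0 < f t)
    (u w : EuclideanSpace ℝ (Fin N) → ℝ)
    (hu : ContDiffOn ℝ 2 u Ω) (hw : ContDiffOn ℝ 2 w Ω)
    (hupos : ∀ x ∈ Ω, 0 < u x) (hwpos : ∀ x ∈ Ω, 0 < w x)
    (husub : ∀ x ∈ Ω, a x * f (u x) ≤ lap u x + b x * ‖gradient u x‖ ^ q)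
    (hwsup : ∀ x ∈ Ω, lap w x + B * ‖gradient w x‖ ^ q ≤ m * f (w x))
    (hblow : ∀ M : ℝ, ∃ δ > 0, ∀ x ∈ Ω, infDist x (frontier Ω) < δ → u x - w x < -M) :
    ∀ x ∈ Ω, u x ≤ w x := by
  by_contra! hcon
  obtain ⟨x₀, hx₀, h₀⟩ := hcon
  obtain ⟨δ, hδ, hbd⟩ := hblow 0
  have hK : IsCompact (closure Ω ∩ {x | δ ≤ infDist x (frontier Ω)}) :=
    (hbdd.isCompact_closure).inter_right
      (isClosed_le continuous_const (continuous_infDist_pt _))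
  have hKΩ : closure Ω ∩ {x | δ ≤ infDist x (frontier Ω)} ⊆ Ω := by
    rintro x ⟨hx, hxδ⟩
    by_contra hxΩ
    have hfr : x ∈ frontier Ω := by
      rw [ho.frontier_eq]
      exact ⟨hx, hxΩ⟩
    have hxδ' : δ ≤ infDist x (frontier Ω) := hxδ
    rw [infDist_zero_of_mem hfr] at hxδ'
    linarith
  have hin : ∀ x ∈ Ω, w x < u x → x ∈ closure Ω ∩ {x | δ ≤ infDist x (frontier Ω)} := by
    intro x hx hlt
    refine ⟨subset_closure hx, ?_⟩
    by_contra hlt'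
    have := hbd x hx (not_le.mp hlt')
    linarith
  obtain ⟨x₁, hx₁K, hmax⟩ := hK.exists_isMaxOn ⟨x₀, hin x₀ hx₀ h₀⟩
    ((hu.continuousOn.sub hw.continuousOn).mono hKΩ)
  have hx₁ := hKΩ hx₁K
  have hle₀ : u x₀ - w x₀ ≤ u x₁ - w x₁ := hmax (hin x₀ hx₀ h₀)
  have hnhds : Ω ∈ 𝓝 x₁ := ho.mem_nhds hx₁
  have hloc : IsLocalMax (fun y => u y - w y) x₁ := by
    filter_upwards [hnhds] with y hy
    by_cases hyw : w y < u y
    · exact hmax (hin y hy hyw)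
    · linarith [not_lt.mp hyw]
  have hu₁ := hu.contDiffAt hnhds
  have hw₁ := hw.contDiffAt hnhds
  have hgrad : gradient u x₁ = gradient w x₁ := by
    have h := hloc.fderiv_eq_zero
    rw [fderiv_fun_sub (hu₁.differentiableAt (by simp)) (hw₁.differentiableAt (by simp)),
      sub_eq_zero] at h
    simp only [gradient, h]
  have hlap := lap_le_lap_of_isLocalMax hu₁ hw₁ hloc
  have hf₁ : f (w x₁) < f (u x₁) := hf (hwpos x₁ hx₁) (hupos x₁ hx₁) (by linarith)
  have hfu := hfpos _ (hupos x₁ hx₁)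
  have h1 := husub x₁ hx₁
  have h2 := hwsup x₁ hx₁
  have h3 : m * f (u x₁) ≤ a x₁ * f (u x₁) := mul_le_mul_of_nonneg_right (ha x₁ hx₁) hfu.le
  have h4 : b x₁ * ‖gradient w x₁‖ ^ q ≤ B * ‖gradient w x₁‖ ^ q :=
    mul_le_mul_of_nonneg_right (hb x₁ hx₁).2 (by positivity)
  have h5 := mul_lt_mul_of_pos_left hf₁ hm
  rw [hgrad] at h1
  linarith
end
end

section
/- Let N ≥ 1, let g be of class ℱ with ∫₁^∞ dt/g(t) < ∞, and let A₁, A₂: ℝ^N → [0,∞) be continuous. Suppose z ∈ C²(ℝ^N) satisfies z > 0, −Δz(x) ≥ A₁(x) + A₂(x) for all x ∈ ℝ^N, and z(x) → 0 as |x| → ∞. Define φ: (0,∞) → (0,∞) by φ(s) = ∫_s^∞ dt/g(t) (a strictly decreasing bijection of (0,∞) onto (0,∞), since g ∈ C¹ with g(0) = 0 forces ∫₀^1 dt/g(t) = ∞), and define w: ℝ^N → (0,∞) implicitly by φ(w(x)) = z(x), i.e. ∫_{w(x)}^∞ dt/g(t) = z(x). Then w ∈ C²(ℝ^N), w(x)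 → +∞ as |x| → ∞, and Δw(x) ≥ (A₁(x) + A₂(x)) · g(w(x)) for all x ∈ ℝ^N. -/
/-!
The barrier is `w = ψ ∘ z`, where `ψ` is the inverse of the tail integral
`φ(s) = ∫_s^∞ dt/g(t)`.

The function `φ` is `C²` on `(0,∞)` with `φ' = -1/g < 0`; it tends to `0` at infinity because `1/g`
is integrable there (`tendsto_tailInt_atTop`), and it is unbounded near `0` because `g(t) ≤ C t` for
small `t` makes `φ(s) + log(s)/C` nonincreasing near `0` (`exists_lt_tailInt`). Hence `φ` is a
decreasing bijection of `(0,∞)` onto itself (`exists_tailInt_eq`), and the inverse function theorem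
makes `ψ` a `C²` function on `(0,∞)` with `ψ' = -g ∘ ψ` (`inverse_contDiffAt_hasDerivAt`).

Consequently `∂ᵢw = -g(w) ∂ᵢz`, and differentiating once more gives
`Δw = g(w) g'(w) |∇z|² - g(w) Δz` (`lap_of_fderiv_eq`). Since `g' ≥ 0`, the first term is nonnegative,
and `-Δz ≥ A₁ + A₂` yields the inequality. Finally `z → 0` at infinity forces `w → ∞`, `φ` being
decreasing.
-/

open MeasureTheory Metric Set Filter
open scoped Topology

noncomputable section

/-- Class ℱ : `h ∈ C¹([0,∞))`, `h(0)=0`, `h' ≥ 0` on `[0,∞)`, `h > 0` on `(0,∞)`. -/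
def MemF (h : ℝ → ℝ) : Prop :=
  ContDiffOn ℝ 1 h (Ici 0) ∧ h 0 = 0 ∧
    (∀ t ∈ Ici (0:ℝ), 0 ≤ derivWithin h (Ici 0) t) ∧ ∀ t > (0:ℝ), 0 < h t

/-- The tail integral `φ(s) = ∫_s^∞ dt/g(t)`. -/
def tailInt (g : ℝ → ℝ) (s : ℝ) : ℝ := ∫ t in Ioi s, (g t)⁻¹

section Tail

variable {g : ℝ → ℝ}

lemma MemF.contDiffAt (hg : MemF g) {s : ℝ} (hs : 0 < s) : ContDiffAt ℝ 1 g s :=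
  hg.1.contDiffAt (Ici_mem_nhds hs)

lemma MemF.deriv_nonneg (hg : MemF g) {s : ℝ} (hs : 0 < s) : 0 ≤ deriv g s := by
  rw [← derivWithin_of_mem_nhds (Ici_mem_nhds hs)]
  exact hg.2.2.1 s hs.le

lemma MemF.contDiffAt_inv (hg : MemF g) {s : ℝ} (hs : 0 < s) :
    ContDiffAt ℝ 1 (fun t => (g t)⁻¹) s :=
  (hg.contDiffAt hs).inv (hg.2.2.2 s hs).ne'

lemma MemF.continuousOn_inv (hg : MemF g) : ContinuousOn (fun t => (g t)⁻¹) (Ioi 0) :=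
  fun _ hs => (hg.contDiffAt_inv hs).continuousAt.continuousWithinAt

lemma MemF.integrableOn_Ioi (hg : MemF g)
    (hgint : IntegrableOn (fun t : ℝ => (g t)⁻¹) (Ici (1:ℝ))) {s : ℝ} (hs : 0 < s) :
    IntegrableOn (fun t : ℝ => (g t)⁻¹) (Ioi s) := by
  have h1 : IntegrableOn (fun t : ℝ => (g t)⁻¹) (Icc s 1) :=
    (hg.continuousOn_inv.mono fun t ht => lt_of_lt_of_le hs ht.1).integrableOn_Icc
  refine (h1.union hgint).mono_set fun t ht => ?_
  rcases le_total t 1 with h | h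
  · exact Or.inl ⟨le_of_lt ht, h⟩
  · exact Or.inr h

lemma tailInt_eq (hg : MemF g)
    (hgint : IntegrableOn (fun t : ℝ => (g t)⁻¹) (Ici (1:ℝ))) {s : ℝ} (hs : 0 < s) :
    tailInt g s = tailInt g 1 - ∫ t in (1:ℝ)..s, (g t)⁻¹ := by
  have := intervalIntegral.integral_Ioi_sub_Ioi' (hg.integrableOn_Ioi hgint one_pos)
    (hg.integrableOn_Ioi hgint hs)
  unfold tailInt
  linarith

lemma hasDerivAt_tailInt (hg : MemF g)
    (hgint : IntegrableOn (fun t : ℝ => (g t)⁻¹) (Ici (1:ℝ))) {s : ℝ} (hs : 0 < s) :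
    HasDerivAt (tailInt g) (-(g s)⁻¹) s := by
  have hii : IntervalIntegrable (fun t : ℝ => (g t)⁻¹) volume 1 s := by
    refine (hg.continuousOn_inv.mono fun t ht => ?_).intervalIntegrable
    exact lt_of_lt_of_le (lt_min one_pos hs) ht.1
  have h := intervalIntegral.integral_hasDerivAt_right hii
    (hg.continuousOn_inv.stronglyMeasurableAtFilter isOpen_Ioi s hs)
    (hg.contDiffAt_inv hs).continuousAt
  refine (h.const_sub (tailInt g 1)).congr_of_eventuallyEq ?_
  filter_upwards [Ioi_mem_nhds hs] with t ht
  exact tailInt_eq hg hgint ht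

lemma contDiffAt_tailInt (hg : MemF g)
    (hgint : IntegrableOn (fun t : ℝ => (g t)⁻¹) (Ici (1:ℝ))) {s : ℝ} (hs : 0 < s) :
    ContDiffAt ℝ 2 (tailInt g) s := by
  have h : ContDiffOn ℝ (1 + 1) (tailInt g) (Ioi 0) := by
    refine (contDiffOn_succ_iff_deriv_of_isOpen isOpen_Ioi).2 ⟨fun t ht =>
      (hasDerivAt_tailInt hg hgint ht).differentiableAt.differentiableWithinAt, by simp, ?_⟩
    refine ContDiffOn.congr (f := fun t => -(g t)⁻¹) ?_ fun t ht =>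
      (hasDerivAt_tailInt hg hgint ht).deriv
    exact fun t ht => (hg.contDiffAt_inv ht).neg.contDiffWithinAt
  rw [one_add_one_eq_two] at h
  exact h.contDiffAt (Ioi_mem_nhds hs)

lemma strictAntiOn_tailInt (hg : MemF g)
    (hgint : IntegrableOn (fun t : ℝ => (g t)⁻¹) (Ici (1:ℝ))) :
    StrictAntiOn (tailInt g) (Ioi 0) := by
  refine strictAntiOn_of_deriv_neg (convex_Ioi 0)
    (fun t ht => (hasDerivAt_tailInt hg hgint ht).continuousAt.continuousWithinAt) fun t ht => ?_
  rw [interior_Ioi] at ht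
  rw [(hasDerivAt_tailInt hg hgint ht).deriv]
  exact neg_neg_of_pos (inv_pos.2 (hg.2.2.2 t ht))

lemma tendsto_tailInt_atTop (hg : MemF g)
    (hgint : IntegrableOn (fun t : ℝ => (g t)⁻¹) (Ici (1:ℝ))) :
    Tendsto (tailInt g) atTop (𝓝 0) := by
  have h := intervalIntegral_tendsto_integral_Ioi 1 (hg.integrableOn_Ioi hgint one_pos) tendsto_id
  have h2 := h.const_sub (tailInt g 1)
  have h0 : tailInt g 1 - ∫ t in Ioi (1:ℝ), (g t)⁻¹ = 0 := sub_self _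
  rw [h0] at h2
  refine h2.congr' ?_
  filter_upwards [eventually_gt_atTop (0:ℝ)] with s hs
  exact (tailInt_eq hg hgint hs).symm

lemma tailInt_pos (hg : MemF g)
    (hgint : IntegrableOn (fun t : ℝ => (g t)⁻¹) (Ici (1:ℝ))) {s : ℝ} (hs : 0 < s) :
    0 < tailInt g s := by
  have h1 : tailInt g (s + 1) < tailInt g s :=
    strictAntiOn_tailInt hg hgint hs (show (0:ℝ) < s + 1 by linarith) (by linarith)
  have h2 : 0 ≤ tailInt g (s + 1) := by
    refine setIntegral_nonneg measurableSet_Ioi fun t ht => ?_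
    have : s + 1 < t := ht
    exact (inv_pos.2 (hg.2.2.2 t (by linarith))).le
  linarith

/-- The tail integral is unbounded near `0`: differentiability of `g` at `0` and `g 0 = 0` give
`g t ≤ C t` for small `t`, so `1/g` dominates the non-integrable `1/(C t)`. -/
lemma exists_lt_tailInt (hg : MemF g)
    (hgint : IntegrableOn (fun t : ℝ => (g t)⁻¹) (Ici (1:ℝ))) (y : ℝ) :
    ∃ s > 0, y < tailInt g s := by
  obtain ⟨C, hC, δ, hδ, hb⟩ : ∃ C > 0, ∃ δ > 0, ∀ t, 0 < t → t < δ → g t ≤ C * t := by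
    have hd : DifferentiableWithinAt ℝ g (Ici 0) 0 :=
      hg.1.differentiableOn (by simp) 0 self_mem_Ici
    obtain ⟨C, hC, h⟩ := hd.isBigO_sub.exists_pos
    have h' := h.bound
    rw [eventually_nhdsWithin_iff, Metric.eventually_nhds_iff] at h'
    obtain ⟨δ, hδ, h'⟩ := h'
    refine ⟨C, hC, δ, hδ, fun t ht htδ => ?_⟩
    have := h' (y := t) (by simpa [abs_of_pos ht] using htδ) ht.le
    rw [hg.2.1, sub_zero, sub_zero, Real.norm_of_nonneg ht.le,
      Real.norm_of_nonneg (hg.2.2.2 t ht).le] at this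
    exact this
  have hder : ∀ t ∈ Ioo 0 δ, HasDerivAt (fun t => tailInt g t + C⁻¹ * Real.log t)
      (-(g t)⁻¹ + C⁻¹ * t⁻¹) t := fun t ht =>
    (hasDerivAt_tailInt hg hgint ht.1).add ((Real.hasDerivAt_log ht.1.ne').const_mul _)
  have hanti : AntitoneOn (fun t => tailInt g t + C⁻¹ * Real.log t) (Ioo 0 δ) := by
    refine antitoneOn_of_deriv_nonpos (convex_Ioo 0 δ)
      (fun t ht => (hder t ht).continuousAt.continuousWithinAt) ?_ ?_
    · rw [interior_Ioo]
      exact fun t ht => (hder t ht).differentiableAt.differentiableWithinAt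
    · rw [interior_Ioo]
      intro t ht
      rw [(hder t ht).deriv, ← mul_inv]
      have := inv_anti₀ (hg.2.2.2 t ht.1) (hb t ht.1 ht.2)
      linarith
  have hlog : Tendsto (fun s => -(C⁻¹ * Real.log s)) (𝓝[>] 0) atTop :=
    tendsto_neg_atBot_atTop.comp (Real.tendsto_log_nhdsGT_zero.const_mul_atBot (inv_pos.2 hC))
  have hδ2 : 0 < δ / 2 := by linarith
  obtain ⟨s, hs, hs'⟩ := ((hlog.eventually_gt_atTop
    (y - (tailInt g (δ / 2) + C⁻¹ * Real.log (δ / 2)))).and (Ioo_mem_nhdsGT hδ2)).exists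
  refine ⟨s, hs'.1, ?_⟩
  have h := hanti ⟨hs'.1, by linarith [hs'.2]⟩ ⟨hδ2, by linarith⟩ hs'.2.le
  simp only at h
  linarith

lemma exists_tailInt_eq (hg : MemF g)
    (hgint : IntegrableOn (fun t : ℝ => (g t)⁻¹) (Ici (1:ℝ))) {y : ℝ} (hy : 0 < y) :
    ∃ s > 0, tailInt g s = y := by
  obtain ⟨a, ha, hya⟩ := exists_lt_tailInt hg hgint y
  obtain ⟨b, hyb, hb⟩ := (((tendsto_tailInt_atTop hg hgint).eventually_lt_const hy).and
    (eventually_gt_atTop 0)).exists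
  have hc : ContinuousOn (tailInt g) (Ioi 0) := fun t ht =>
    (hasDerivAt_tailInt hg hgint ht).continuousAt.continuousWithinAt
  exact isPreconnected_Ioi.intermediate_value (mem_Ioi.2 hb) (mem_Ioi.2 ha) hc ⟨hyb.le, hya.le⟩

/-- A right inverse `ψ` of the tail integral with positive values is `C²` on `(0,∞)`, with
`ψ' = -g ∘ ψ`. -/
lemma inverse_contDiffAt_hasDerivAt (hg : MemF g)
    (hgint : IntegrableOn (fun t : ℝ => (g t)⁻¹) (Ici (1:ℝ))) {ψ : ℝ → ℝ}
    (hψ0 : ∀ y > 0, 0 < ψ y) (hψ : ∀ y > 0, tailInt g (ψ y) = y) {y : ℝ} (hy : 0 < y) :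
    ContDiffAt ℝ 2 ψ y ∧ HasDerivAt ψ (-(g (ψ y))) y := by
  have hgψ := hg.2.2.2 _ (hψ0 y hy)
  have hne : -(g (ψ y))⁻¹ ≠ 0 := neg_ne_zero.2 (inv_ne_zero hgψ.ne')
  have hd := hasDerivAt_tailInt hg hgint (hψ0 y hy)
  have hc := contDiffAt_tailInt hg hgint (hψ0 y hy)
  have hleft : ∀ᶠ s in 𝓝 (ψ y), ψ (tailInt g s) = s := by
    filter_upwards [Ioi_mem_nhds (hψ0 y hy)] with s hs
    have hp := tailInt_pos hg hgint hs
    exact (strictAntiOn_tailInt hg hgint).injOn (hψ0 _ hp) hs (hψ _ hp)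
  have hcd : ContDiffAt ℝ 2 ψ y := by
    have hf' := hd.hasFDerivAt_equiv hne
    have h1 := hc.to_localInverse hf' two_ne_zero
    have h2 := (hc.hasStrictFDerivAt' hf' two_ne_zero).localInverse_unique hleft
    rw [hψ y hy] at h1 h2
    exact h1.congr_of_eventuallyEq h2
  refine ⟨hcd, ?_⟩
  have := HasDerivAt.of_local_left_inverse hcd.continuousAt hd hne
    (by filter_upwards [Ioi_mem_nhds hy] with t ht using hψ t ht)
  rwa [inv_neg, inv_inv] at this

end Tail

/-- If `∇w = -g(w) ∇z`, then `Δw = g(w) g'(w) |∇z|² - g(w) Δz`. -/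
lemma lap_of_fderiv_eq {N : ℕ} {g : ℝ → ℝ} {z w : EuclideanSpace ℝ (Fin N) → ℝ}
    (hz : ContDiff ℝ 2 z) (hw : ∀ x, HasFDerivAt w (-(g (w x)) • fderiv ℝ z x) x)
    (x : EuclideanSpace ℝ (Fin N)) (hg : DifferentiableAt ℝ g (w x)) :
    lap w x = g (w x) * deriv g (w x) *
      ∑ i : Fin N, (fderiv ℝ z x (EuclideanSpace.single i 1)) ^ 2 - g (w x) * lap z x := by
  unfold lap
  rw [Finset.mul_sum, Finset.mul_sum, ← Finset.sum_sub_distrib]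
  refine Finset.sum_congr rfl fun i _ => ?_
  set e : EuclideanSpace ℝ (Fin N) := EuclideanSpace.single i 1
  have hfun : (fun y => fderiv ℝ w y e) = fun y => -(g (w y)) * fderiv ℝ z y e := by
    funext y
    rw [(hw y).fderiv]
    simp
  have hzi : DifferentiableAt ℝ (fun y => fderiv ℝ z y e) x :=
    (((hz.fderiv_right (m := 1) (by norm_num)).clm_apply contDiff_const).differentiable
      (by simp)).differentiableAt
  have hgw : HasFDerivAt (fun y => -(g (w y)))
      (-(deriv g (w x) • (-(g (w x)) • fderiv ℝ z x))) x :=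
    (hg.hasDerivAt.comp_hasFDerivAt x (hw x)).neg
  rw [hfun, (hgw.fun_mul hzi.hasFDerivAt).fderiv]
  simp only [ContinuousLinearMap.add_apply, ContinuousLinearMap.smul_apply,
    ContinuousLinearMap.neg_apply, smul_eq_mul]
  ring

/-- Construction of the lower barrier `w` in the proof of Theorem 1.2: given a positive `C²`
supersolution `z` of `−Δz = A₁ + A₂` vanishing at infinity, the function `w` implicitly
defined by `∫_{w(x)}^∞ dt/g(t) = z(x)` is `C²`, tends to `+∞` at infinity, and satisfies
`Δw ≥ (A₁ + A₂) g(w)` on `ℝ^N`. -/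
theorem lower_barrier
    {N : ℕ} (hN : 1 ≤ N) (g : ℝ → ℝ) (hg : MemF g)
    (hgint : IntegrableOn (fun t : ℝ => (g t)⁻¹) (Ici (1:ℝ)))
    (A₁ A₂ : EuclideanSpace ℝ (Fin N) → ℝ)
    (hA₁ : Continuous A₁) (hA₁' : ∀ x, 0 ≤ A₁ x)
    (hA₂ : Continuous A₂) (hA₂' : ∀ x, 0 ≤ A₂ x)
    (z : EuclideanSpace ℝ (Fin N) → ℝ) (hz : ContDiff ℝ 2 z) (hzpos : ∀ x, 0 < z x)
    (hzsuper : ∀ x, A₁ x + A₂ x ≤ -lap z x)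
    (hz0 : Tendsto z (cocompact (EuclideanSpace ℝ (Fin N))) (𝓝 0)) :
    ∃ w : EuclideanSpace ℝ (Fin N) → ℝ,
      (∀ x, 0 < w x) ∧
      (∀ x, (∫ t in Ioi (w x), (g t)⁻¹) = z x) ∧
      ContDiff ℝ 2 w ∧
      Tendsto w (cocompact (EuclideanSpace ℝ (Fin N))) atTop ∧
      ∀ x, (A₁ x + A₂ x) * g (w x) ≤ lap w x := by
  choose! ψ hψ0 hψ using fun (y : ℝ) (hy : 0 < y) => exists_tailInt_eq hg hgint hy
  have hψd := fun x => inverse_contDiffAt_hasDerivAt hg hgint hψ0 hψ (hzpos x)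
  have hw0 : ∀ x, 0 < ψ (z x) := fun x => hψ0 _ (hzpos x)
  refine ⟨fun x => ψ (z x), hw0, fun x => hψ _ (hzpos x), ?_, ?_, fun x => ?_⟩
  · exact contDiff_iff_contDiffAt.2 fun x => (hψd x).1.comp x hz.contDiffAt
  · refine tendsto_atTop.2 fun M => ?_
    have hM : 0 < max M 1 := lt_max_of_lt_right one_pos
    filter_upwards [hz0.eventually_lt_const (tailInt_pos hg hgint hM)] with x hx
    rw [← hψ _ (hzpos x), (strictAntiOn_tailInt hg hgint).lt_iff_gt (hw0 x) hM] at hx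
    exact (le_max_left M 1).trans hx.le
  · have hfd : ∀ x, HasFDerivAt (fun x => ψ (z x)) (-(g (ψ (z x))) • fderiv ℝ z x) x := fun x =>
      (hψd x).2.comp_hasFDerivAt x (hz.differentiable (by simp) x).hasFDerivAt
    rw [lap_of_fderiv_eq hz hfd x ((hg.contDiffAt (hw0 x)).differentiableAt (by simp))]
    have hgpos := hg.2.2.2 _ (hw0 x)
    have h1 : 0 ≤ g (ψ (z x)) * deriv g (ψ (z x)) *
        ∑ i : Fin N, (fderiv ℝ z x (EuclideanSpace.single i 1)) ^ 2 :=
      mul_nonneg (mul_nonneg hgpos.le (hg.deriv_nonneg (hw0 x)))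
        (Finset.sum_nonneg fun i _ => sq_nonneg _)
    have h2 := mul_le_mul_of_nonneg_right (hzsuper x) hgpos.le
    linarith
end
end

section
/- Let h be of class ℱ, i.e. h ∈ C¹([0,∞)) with h(0) = 0, h'(t) ≥ 0 for all t ≥ 0, and h(t) > 0 for t > 0. If h satisfies the Keller–Osserman condition ∫₁^∞ H(t)^{-1/2} dt < ∞, where H(t) = ∫₀^t h(s) ds, then ∫₁^∞ dt/h(t) < ∞. -/
/-!
Write `H t = ∫₀ᵗ h` and `F = H ^ (-1/2)`, so that `F` is positive and integrable on `[1, ∞)` by the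
Keller–Osserman condition. Two consequences of monotonicity give the result by comparison with `F`.

* Since `h` is nondecreasing, `H t ≤ t * h t`, that is `1 / h t ≤ t / H t = (t * F t) * F t`
  (`primitive_le_mul`).
* Since `H` is nondecreasing, `F` is nonincreasing, and a nonnegative nonincreasing integrable
  function satisfies `t * F t ≤ C` (`mul_le_of_antitoneOn_integrableOn`).

Hence `1 / h ≤ C * F` on `[1, ∞)`.
-/

open MeasureTheory Set

/-- Keller–Osserman condition: `∫₁^∞ H(t)^{-1/2} dt < ∞` where `H(t)=∫₀^t h(s) ds`. -/
def KellerOsserman (h : ℝ → ℝ) : Prop :=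
  IntegrableOn (fun t : ℝ => (∫ s in (0:ℝ)..t, h s) ^ (-(1:ℝ)/2)) (Ici (1:ℝ))

theorem MemF.monotoneOn {h : ℝ → ℝ} (hF : MemF h) : MonotoneOn h (Ici 0) := by
  obtain ⟨hC, -, hd, -⟩ := hF
  have hdiff := hC.differentiableOn one_ne_zero
  refine monotoneOn_of_deriv_nonneg (convex_Ici 0) hC.continuousOn
    (hdiff.mono interior_subset) fun x hx => ?_
  rw [← derivWithin_of_mem_nhds (mem_interior_iff_mem_nhds.1 hx)]
  exact hd x (interior_subset hx)

theorem MemF.intervalIntegrable {h : ℝ → ℝ} (hF : MemF h) {a b : ℝ} (ha : 0 ≤ a) (hb : 0 ≤ b) :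
    IntervalIntegrable h volume a b :=
  (hF.1.continuousOn.mono fun _ hx => (le_min ha hb).trans hx.1).intervalIntegrable

theorem MemF.primitive_pos {h : ℝ → ℝ} (hF : MemF h) {t : ℝ} (ht : 0 < t) :
    0 < ∫ s in (0:ℝ)..t, h s :=
  intervalIntegral.intervalIntegral_pos_of_pos_on (hF.intervalIntegrable le_rfl ht.le)
    (fun x hx => hF.2.2.2 x hx.1) ht

theorem MemF.primitive_mono {h : ℝ → ℝ} (hF : MemF h) {s t : ℝ} (hs : 0 < s) (hst : s ≤ t) :
    ∫ x in (0:ℝ)..s, h x ≤ ∫ x in (0:ℝ)..t, h x := by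
  have ht := hs.trans_le hst
  rw [← intervalIntegral.integral_add_adjacent_intervals
    (hF.intervalIntegrable le_rfl hs.le) (hF.intervalIntegrable hs.le ht.le)]
  have := intervalIntegral.integral_nonneg (μ := volume) hst
    fun x hx => (hF.2.2.2 x (hs.trans_le hx.1)).le
  linarith

theorem MemF.primitive_le_mul {h : ℝ → ℝ} (hF : MemF h) {t : ℝ} (ht : 0 < t) :
    ∫ s in (0:ℝ)..t, h s ≤ t * h t := by
  have := intervalIntegral.integral_mono_on ht.le (hF.intervalIntegrable le_rfl ht.le)
    (intervalIntegrable_const (c := h t))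
    fun x hx => hF.monotoneOn hx.1 (mem_Ici.2 ht.le) hx.2
  simpa using this

/-- The area under `F` over `[1, t]` is at least `(t - 1) * F t`, so `t * F t` stays bounded. -/
theorem mul_le_of_antitoneOn_integrableOn {F : ℝ → ℝ} (hF : AntitoneOn F (Ici 1))
    (h0 : ∀ t ∈ Ici (1:ℝ), 0 ≤ F t) (hi : IntegrableOn F (Ici 1)) {t : ℝ} (ht : 1 ≤ t) :
    t * F t ≤ (∫ s in Ici (1:ℝ), F s) + F 1 := by
  have h1 : ∫ _ in Icc 1 t, F t ≤ ∫ s in Icc 1 t, F s :=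
    setIntegral_mono_on (integrableOn_const (by simp)) (hi.mono_set Icc_subset_Ici_self)
      measurableSet_Icc fun x hx => hF hx.1 ht hx.2
  have h2 : ∫ s in Icc 1 t, F s ≤ ∫ s in Ici (1:ℝ), F s :=
    setIntegral_mono_set hi ((ae_restrict_iff' measurableSet_Ici).2 (.of_forall h0))
      Icc_subset_Ici_self.eventuallyLE
  have h3 : F t ≤ F 1 := hF self_mem_Ici ht ht
  have h4 : ∫ _ in Icc 1 t, F t = (t - 1) * F t := by
    simp [ht]
  linarith

/-- If `h` is of class ℱ and satisfies the Keller–Osserman condition, then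
`∫₁^∞ dt/h(t) < ∞`. -/
theorem integrable_inv_of_kellerOsserman
    (h : ℝ → ℝ) (hF : MemF h) (hKO : KellerOsserman h) :
    IntegrableOn (fun t : ℝ => (h t)⁻¹) (Ici (1:ℝ)) := by
  have hpos : ∀ t ∈ Ici (1:ℝ), 0 < t := fun t ht => zero_lt_one.trans_le ht
  set F : ℝ → ℝ := fun t => (∫ s in (0:ℝ)..t, h s) ^ (-(1:ℝ)/2) with hFdef
  have hanti : AntitoneOn F (Ici 1) := fun s hs t _ hst =>
    Real.rpow_le_rpow_of_nonpos (hF.primitive_pos (hpos s hs))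
      (hF.primitive_mono (hpos s hs) hst) (by norm_num)
  have hnn : ∀ t ∈ Ici (1:ℝ), 0 ≤ F t := fun t ht =>
    Real.rpow_nonneg (hF.primitive_pos (hpos t ht)).le _
  have hmeas : AEStronglyMeasurable (fun t => (h t)⁻¹) (volume.restrict (Ici 1)) :=
    ((hF.1.continuousOn.mono (Ici_subset_Ici.2 zero_le_one)).inv₀
      fun t ht => (hF.2.2.2 t (hpos t ht)).ne').aestronglyMeasurable measurableSet_Ici
  refine Integrable.mono' (Integrable.const_mul hKO ((∫ s in Ici (1:ℝ), F s) + F 1)) hmeas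
    ((ae_restrict_iff' measurableSet_Ici).2 (.of_forall fun t ht => ?_))
  have ht0 := hpos t ht
  have hht := hF.2.2.2 t ht0
  have hH := hF.primitive_pos ht0
  have hsq : F t * F t = (∫ s in (0:ℝ)..t, h s)⁻¹ := by
    rw [hFdef, ← Real.rpow_add hH, ← Real.rpow_neg_one]
    norm_num
  rw [Real.norm_of_nonneg (inv_nonneg.2 hht.le)]
  calc (h t)⁻¹ ≤ t * (∫ s in (0:ℝ)..t, h s)⁻¹ := by
        rw [← div_eq_mul_inv, inv_eq_one_div, div_le_div_iff₀ hht hH, one_mul]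
        exact hF.primitive_le_mul ht0
    _ = t * F t * F t := by rw [← hsq, mul_assoc]
    _ ≤ ((∫ s in Ici (1:ℝ), F s) + F 1) * F t :=
        mul_le_mul_of_nonneg_right (mul_le_of_antitoneOn_integrableOn hanti hnn hKO ht) (hnn t ht)
end
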